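/- arXiv:2311.01891 — 4 statements merged into one kernel-verified Lean document; each statement's English description precedes it below -/
import Mathlib

section
/- Let T>0, λ>0 and c>0. Let y : [0,T] → [0,∞) be differentiable and satisfy y'(t) ≤ 2·λ·( y(t)^{1/2} − c·y(t)/(1 + (c/2)·y(t)^{1/2}) ) for all t ∈ [0,T]. Then for all t ∈ [0,T]: y(t) ≤ max{ y(0), 4/c² }. -/
open Real Set

/-!
With `s = √y`, the right-hand side `s - c * s ^ 2 / (1 + c / 2 * s)` equals
`s * (1 - c * s / 2) / (1 + c / 2 * s)`, so it changes sign exactly at `s = 2 / c`. Above the level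
`4 / c ^ 2` the function `y` can therefore only decrease, and it cannot cross a level at or above
`4 / c ^ 2` upwards.
-/

theorem image_le_of_deriv_right_nonpos_of_lt {f f' : ℝ → ℝ} {a b M : ℝ}
    (hf : ContinuousOn f (Icc a b)) (hf' : ∀ x ∈ Ico a b, HasDerivWithinAt f (f' x) (Ici x) x)
    (ha : f a ≤ M) (bound : ∀ x ∈ Ico a b, M < f x → f' x ≤ 0) :
    ∀ ⦃x⦄, x ∈ Icc a b → f x ≤ M := by
  -- A barrier of small positive slope turns the weak sign condition on `f'` into a strict one.
  have le_barrier (ε : ℝ) (hε : 0 < ε) : ∀ ⦃x⦄, x ∈ Icc a b → f x ≤ M + ε * (1 + (x - a)) := by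
    have barrier_deriv (x : ℝ) : HasDerivAt (fun x ↦ M + ε * (1 + (x - a))) ε x := by
      simpa only [mul_one, id] using
        ((((hasDerivAt_id x).sub_const a).const_add 1).const_mul ε).const_add M
    refine image_le_of_deriv_right_lt_deriv_boundary hf hf' (by linarith) barrier_deriv ?_
    intro x hx hfx
    have above : M < f x := by
      have : 0 < 1 + (x - a) := by linarith [hx.1]
      rw [hfx]
      exact lt_add_of_pos_right M (mul_pos hε this)
    exact (bound x hx above).trans_lt hε
  intro x hx
  have hpos : 0 < 1 + (x - a) := by linarith [hx.1]
  refine le_of_forall_pos_le_add fun δ hδ ↦ ?_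
  simpa only [div_mul_cancel₀ δ hpos.ne'] using le_barrier (δ / (1 + (x - a))) (div_pos hδ hpos) hx

theorem sqrt_le_mul_div_one_add_mul_sqrt_iff {c y : ℝ} (hc : 0 < c) (hy : 0 < y) :
    √y ≤ c * y / (1 + c / 2 * √y) ↔ 4 / c ^ 2 ≤ y := by
  have hs : 0 < √y := sqrt_pos.2 hy
  calc √y ≤ c * y / (1 + c / 2 * √y)
      ↔ √y * (1 + c / 2 * √y) ≤ √y * (c * √y) := by
        rw [le_div_iff₀ (by positivity), mul_left_comm (√y) c, mul_self_sqrt hy.le]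
    _ ↔ 1 + c / 2 * √y ≤ c * √y := mul_le_mul_iff_right₀ hs
    _ ↔ 2 ≤ √y * c := by constructor <;> intro h <;> linarith
    _ ↔ 2 / c ≤ √y := (div_le_iff₀ hc).symm
    _ ↔ (2 / c) ^ 2 ≤ y := le_sqrt' (by positivity)
    _ ↔ 4 / c ^ 2 ≤ y := by rw [div_pow]; norm_num

theorem energy_bound_weakened_damping_general {a b c : ℝ} (hc : 0 < c) {lam y y' : ℝ → ℝ}
    (hlam : ∀ t ∈ Ico a b, 0 ≤ lam t) (hy : ContinuousOn y (Icc a b))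
    (hdy : ∀ t ∈ Ico a b, HasDerivWithinAt y (y' t) (Ici t) t)
    (hiy : ∀ t ∈ Ico a b, 4 / c ^ 2 < y t →
      y' t ≤ 2 * lam t * (√(y t) - c * y t / (1 + c / 2 * √(y t)))) :
    ∀ t ∈ Icc a b, y t ≤ max (y a) (4 / c ^ 2) := by
  refine image_le_of_deriv_right_nonpos_of_lt hy hdy (le_max_left _ _) fun t ht hyt ↦ ?_
  have above : 4 / c ^ 2 < y t := (le_max_right _ _).trans_lt hyt
  have damping_dominates : √(y t) ≤ c * y t / (1 + c / 2 * √(y t)) :=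
    (sqrt_le_mul_div_one_add_mul_sqrt_iff hc (lt_trans (by positivity) above)).2 above.le
  exact (hiy t ht above).trans <| mul_nonpos_of_nonneg_of_nonpos
    (mul_nonneg zero_le_two (hlam t ht)) (sub_nonpos.2 damping_dominates)

/-- Comparison-principle estimate for the energy differential inequality of the
Vlasov-Stokes equation under a smallness condition: the damping term is weakened by a
factor `1 / (1 + (c/2) * sqrt y)`, yet the quantity stays bounded by `max (y 0) (4 / c ^ 2)`
uniformly in `lam`. -/
theorem energy_bound_weakened_damping
    (T lam c : ℝ) (hT : 0 < T) (hlam : 0 < lam) (hc : 0 < c)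
    (y y' : ℝ → ℝ)
    (hy0 : ∀ t ∈ Icc (0:ℝ) T, 0 ≤ y t)
    (hdy : ∀ t ∈ Icc (0:ℝ) T, HasDerivAt y (y' t) t)
    (hiy : ∀ t ∈ Icc (0:ℝ) T,
      y' t ≤ 2 * lam * (Real.sqrt (y t) - c * y t / (1 + c / 2 * Real.sqrt (y t)))) :
    ∀ t ∈ Icc (0:ℝ) T, y t ≤ max (y 0) (4 / c ^ 2) :=
  energy_bound_weakened_damping_general hc (fun _ _ ↦ hlam.le)
    (fun t ht ↦ (hdy t ht).continuousAt.continuousWithinAt)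
    (fun t ht ↦ (hdy t (Ico_subset_Icc_self ht)).hasDerivWithinAt)
    fun t ht _ ↦ hiy t (Ico_subset_Icc_self ht)
end

section
/- Let T>0, let g ∈ ℝ³, let α : [0,T] → [0,∞) be continuous, and let u : [0,T] × ℝ³ → ℝ³ be such that for every s ∈ [0,T] the map u(s,·) is Lipschitz with Lipschitz constant at most α(s). Let λ ≥ 4·(1 + sup_{s∈[0,T]} α(s)). Fix t ∈ [0,T], x ∈ ℝ³ and v₁, v₂ ∈ ℝ³, and suppose that for i = 1,2 the pair (X_i, V_i) : [0,t] → ℝ³ × ℝ³ is differentiable and satisfies the characteristic system X_i'(s) = V_i(s), V_i'(s) = λ·(g + u(s, X_i(s)) − V_i(s)) for all s ∈ [0,t], with terminal conditions X_i(t) = x and V_i(t) = v_i. Then, with A(t) := exp(2·∫₀ᵗ α(s) ds), one has A(t)^{−1}·e^{λt}·|v₁ − v₂| ≤ |V₁(0) − V₂(0)| ≤ A(t)·e^{λt}·|v₁ − v₂|. In particular, the map v ↦ V(0) (the time-0 velocity of the characteristic ending at (x,v) at time t) is bi-Lipschitz. -/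
open Real Set

local notation "E3" => EuclideanSpace ℝ (Fin 3)

/-!
The difference of two characteristics ending at the same point satisfies `X' = V`,
`V' = lam • (U - V)`, `X t = 0`, with `‖U‖ ≤ α ‖X‖`. When `4 α ≤ lam`, the function
`h = ‖V‖² - (lam / 2)² ‖X‖²` satisfies `h' + lam h ≤ -lam (‖V‖ - (lam / 2) ‖X‖)² ≤ 0`. Since
`h t ≥ 0`, integrating backwards gives `h ≥ 0`, that is `lam ‖X‖ ≤ 2 ‖V‖`. Hence
`lam ‖U‖ ≤ 2 α ‖V‖`, so the logarithmic derivative of `‖V‖` stays between `-lam - 2 α` and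
`-lam + 2 α`.
-/

open scoped RealInnerProductSpace

section Gronwall

variable {a b : ℝ} {k : ℝ → ℝ}

theorem integral_const_mul_sub_const (hk : IntervalIntegrable k MeasureTheory.volume a b)
    (c d : ℝ) : ∫ s in a..b, (c * k s - d) = c * (∫ s in a..b, k s) - d * (b - a) := by
  rw [intervalIntegral.integral_sub (hk.const_mul c) intervalIntegrable_const,
    intervalIntegral.integral_const_mul, intervalIntegral.integral_const, smul_eq_mul,
    mul_comm (b - a)]

theorem le_exp_integral_mul_of_deriv_le_mul {f f' : ℝ → ℝ} (hab : a ≤ b)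
    (hk : ContinuousOn k (Icc a b))
    (hf : ∀ s ∈ Icc a b, HasDerivWithinAt f (f' s) (Icc a b) s)
    (hle : ∀ s ∈ Icc a b, f' s ≤ k s * f s) :
    f b ≤ exp (∫ s in a..b, k s) * f a := by
  set K : ℝ → ℝ := fun s ↦ ∫ r in a..s, k r with hK
  have hK' : ∀ s ∈ Icc a b, HasDerivWithinAt K (k s) (Icc a b) s := fun s hs ↦
    have : Fact (s ∈ Icc a b) := ⟨hs⟩
    intervalIntegral.integral_hasDerivWithinAt_right
      ((hk.mono (Icc_subset_Icc_right hs.2)).intervalIntegrable_of_Icc hs.1)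
      (hk.stronglyMeasurableAtFilter_nhdsWithin measurableSet_Icc s) (hk s hs)
  have hderiv : ∀ s ∈ Icc a b, HasDerivWithinAt (fun s ↦ exp (-K s) * f s)
      (exp (-K s) * (f' s - k s * f s)) (Icc a b) s := fun s hs ↦
    ((hK' s hs).neg.exp.mul (hf s hs)).congr_deriv (by simp only [Pi.neg_apply]; ring)
  have hanti : AntitoneOn (fun s ↦ exp (-K s) * f s) (Icc a b) :=
    antitoneOn_of_hasDerivWithinAt_nonpos (convex_Icc a b)
      (fun s hs ↦ (hderiv s hs).continuousWithinAt)
      (fun s hs ↦ (hderiv s (interior_subset hs)).mono interior_subset)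
      fun s hs ↦ mul_nonpos_of_nonneg_of_nonpos (exp_pos _).le
        (sub_nonpos.2 (hle s (interior_subset hs)))
  calc f b = exp (K b) * (exp (-K b) * f b) := by
        rw [← mul_assoc, ← exp_add, add_neg_cancel, exp_zero, one_mul]
    _ ≤ exp (K b) * (exp (-K a) * f a) := by
        gcongr ?_ * ?_
        exact hanti (left_mem_Icc.2 hab) (right_mem_Icc.2 hab) hab
    _ = exp (K b) * f a := by simp [hK]

variable {E : Type*} [NormedAddCommGroup E] [InnerProductSpace ℝ E] {F F' : ℝ → E}

theorem norm_le_exp_integral_mul_norm_of_inner_deriv_le (hab : a ≤ b)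
    (hk : ContinuousOn k (Icc a b))
    (hF : ∀ s ∈ Icc a b, HasDerivWithinAt F (F' s) (Icc a b) s)
    (hle : ∀ s ∈ Icc a b, ⟪F s, F' s⟫ ≤ k s * ‖F s‖ ^ 2) :
    ‖F b‖ ≤ exp (∫ s in a..b, k s) * ‖F a‖ := by
  have hsq : ‖F b‖ ^ 2 ≤ exp (∫ s in a..b, 2 * k s) * ‖F a‖ ^ 2 :=
    le_exp_integral_mul_of_deriv_le_mul hab (hk.const_mul 2) (fun s hs ↦ (hF s hs).norm_sq)
      fun s hs ↦ by linarith [hle s hs]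
  rw [intervalIntegral.integral_const_mul, two_mul, exp_add, ← sq, ← mul_pow] at hsq
  exact le_of_sq_le_sq hsq (by positivity)

theorem exp_integral_mul_norm_le_norm_of_le_inner_deriv (hab : a ≤ b)
    (hk : ContinuousOn k (Icc a b))
    (hF : ∀ s ∈ Icc a b, HasDerivWithinAt F (F' s) (Icc a b) s)
    (hle : ∀ s ∈ Icc a b, k s * ‖F s‖ ^ 2 ≤ ⟪F s, F' s⟫) :
    exp (∫ s in a..b, k s) * ‖F a‖ ≤ ‖F b‖ := by
  have hsq : -‖F b‖ ^ 2 ≤ exp (∫ s in a..b, 2 * k s) * -‖F a‖ ^ 2 :=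
    le_exp_integral_mul_of_deriv_le_mul hab (hk.const_mul 2) (fun s hs ↦ (hF s hs).norm_sq.neg)
      fun s hs ↦ by simp only [Pi.neg_apply]; linarith [hle s hs]
  rw [mul_neg, neg_le_neg_iff, intervalIntegral.integral_const_mul, two_mul, exp_add, ← sq,
    ← mul_pow] at hsq
  exact le_of_sq_le_sq hsq (norm_nonneg _)

end Gronwall

section Characteristics

variable {E : Type*} [NormedAddCommGroup E] [NormedSpace ℝ E]

/-- `(X, V)` solves the characteristic system of the Vlasov–Stokes equation with friction `lam`,
gravity `g` and fluid velocity `u` on the time set `I`. Derivatives are taken within `I`, so they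
are one-sided at the endpoints of an interval. -/
structure IsCharacteristicOn (lam : ℝ) (g : E) (u : ℝ → E → E) (X V : ℝ → E) (I : Set ℝ) :
    Prop where
  hasDerivWithinAt_position : ∀ s ∈ I, HasDerivWithinAt X (V s) I s
  hasDerivWithinAt_velocity :
    ∀ s ∈ I, HasDerivWithinAt V (lam • (g + u s (X s) - V s)) I s

namespace IsCharacteristicOn

variable {lam : ℝ} {g : E} {u : ℝ → E → E} {X V X₁ V₁ X₂ V₂ : ℝ → E} {I J : Set ℝ}

theorem mono (h : IsCharacteristicOn lam g u X V I) (hJ : J ⊆ I) :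
    IsCharacteristicOn lam g u X V J where
  hasDerivWithinAt_position s hs := (h.hasDerivWithinAt_position s (hJ hs)).mono hJ
  hasDerivWithinAt_velocity s hs := (h.hasDerivWithinAt_velocity s (hJ hs)).mono hJ

/-- The difference of the fluid velocities is evaluated along the two given curves, so it enters as
a fluid velocity that is constant in space. -/
theorem sub (h₁ : IsCharacteristicOn lam g u X₁ V₁ I) (h₂ : IsCharacteristicOn lam g u X₂ V₂ I) :
    IsCharacteristicOn lam 0 (fun s _ ↦ u s (X₁ s) - u s (X₂ s)) (X₁ - X₂) (V₁ - V₂) I where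
  hasDerivWithinAt_position s hs :=
    (h₁.hasDerivWithinAt_position s hs).sub (h₂.hasDerivWithinAt_position s hs)
  hasDerivWithinAt_velocity s hs :=
    ((h₁.hasDerivWithinAt_velocity s hs).sub (h₂.hasDerivWithinAt_velocity s hs)).congr_deriv <| by
      rw [← smul_sub, Pi.sub_apply]
      congr 1
      abel

end IsCharacteristicOn

end Characteristics

section VelocityEstimates

variable {E : Type*} [NormedAddCommGroup E] [InnerProductSpace ℝ E]

namespace IsCharacteristicOn

variable {lam a b : ℝ} {α : ℝ → ℝ} {u : ℝ → E → E} {X V : ℝ → E}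

theorem friction_mul_norm_position_left_le (h : IsCharacteristicOn lam 0 u X V (Icc a b))
    (hab : a ≤ b) (hlam : 0 ≤ lam) (hu : ∀ s ∈ Icc a b, ‖u s (X s)‖ ≤ lam / 4 * ‖X s‖)
    (hXb : X b = 0) :
    lam * ‖X a‖ ≤ 2 * ‖V a‖ := by
  have hgronwall : ‖V b‖ ^ 2 - (lam / 2) ^ 2 * ‖X b‖ ^ 2 ≤
      exp (∫ _ in a..b, -lam) * (‖V a‖ ^ 2 - (lam / 2) ^ 2 * ‖X a‖ ^ 2) := by
    refine le_exp_integral_mul_of_deriv_le_mul hab continuousOn_const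
      (fun s hs ↦ (h.hasDerivWithinAt_velocity s hs).norm_sq.sub
        ((h.hasDerivWithinAt_position s hs).norm_sq.const_mul ((lam / 2) ^ 2))) fun s hs ↦ ?_
    have hVU : ⟪V s, u s (X s)⟫ ≤ ‖V s‖ * (lam / 4 * ‖X s‖) :=
      (real_inner_le_norm _ _).trans (by gcongr; exact hu s hs)
    have hXV : -(‖X s‖ * ‖V s‖) ≤ ⟪X s, V s⟫ := (abs_le.1 (abs_real_inner_le_norm _ _)).1
    rw [zero_add, inner_smul_right, inner_sub_right, real_inner_self_eq_norm_sq]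
    calc 2 * (lam * (⟪V s, u s (X s)⟫ - ‖V s‖ ^ 2)) - (lam / 2) ^ 2 * (2 * ⟪X s, V s⟫)
        ≤ 2 * (lam * (‖V s‖ * (lam / 4 * ‖X s‖) - ‖V s‖ ^ 2)) -
            (lam / 2) ^ 2 * (2 * -(‖X s‖ * ‖V s‖)) := by gcongr
      _ = -lam * (‖V s‖ ^ 2 - (lam / 2) ^ 2 * ‖X s‖ ^ 2) -
            lam * (‖V s‖ - lam / 2 * ‖X s‖) ^ 2 := by ring
      _ ≤ -lam * (‖V s‖ ^ 2 - (lam / 2) ^ 2 * ‖X s‖ ^ 2) := sub_le_self _ (by positivity)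
  have hnonneg : 0 ≤ ‖V a‖ ^ 2 - (lam / 2) ^ 2 * ‖X a‖ ^ 2 := by
    refine nonneg_of_mul_nonneg_right (le_trans ?_ hgronwall) (exp_pos _)
    simp [hXb]
  have hle : lam / 2 * ‖X a‖ ≤ ‖V a‖ :=
    le_of_sq_le_sq (by rw [mul_pow]; exact sub_nonneg.1 hnonneg) (norm_nonneg _)
  linarith

theorem friction_mul_norm_position_le (h : IsCharacteristicOn lam 0 u X V (Icc a b))
    (hlam : 0 ≤ lam) (hu : ∀ s ∈ Icc a b, ‖u s (X s)‖ ≤ lam / 4 * ‖X s‖) (hXb : X b = 0)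
    {s : ℝ} (hs : s ∈ Icc a b) :
    lam * ‖X s‖ ≤ 2 * ‖V s‖ :=
  have hsub : Icc s b ⊆ Icc a b := Icc_subset_Icc_left hs.1
  (h.mono hsub).friction_mul_norm_position_left_le hs.2 hlam (fun r hr ↦ hu r (hsub hr)) hXb

theorem abs_friction_mul_inner_le (h : IsCharacteristicOn lam 0 u X V (Icc a b))
    (hα : ∀ s ∈ Icc a b, 0 ≤ α s) (hαlam : ∀ s ∈ Icc a b, 4 * α s ≤ lam)
    (hu : ∀ s ∈ Icc a b, ‖u s (X s)‖ ≤ α s * ‖X s‖) (hXb : X b = 0) {s : ℝ} (hs : s ∈ Icc a b) :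
    |lam * ⟪V s, u s (X s)⟫| ≤ 2 * α s * ‖V s‖ ^ 2 := by
  have hαs : 0 ≤ α s := hα s hs
  have hlam : 0 ≤ lam := by linarith [hαlam s hs]
  have hX : lam * ‖X s‖ ≤ 2 * ‖V s‖ :=
    h.friction_mul_norm_position_le hlam
      (fun r hr ↦ (hu r hr).trans (by gcongr; linarith [hαlam r hr])) hXb hs
  calc |lam * ⟪V s, u s (X s)⟫| ≤ lam * (‖V s‖ * (α s * ‖X s‖)) := by
        rw [abs_mul, abs_of_nonneg hlam]
        gcongr
        exact (abs_real_inner_le_norm _ _).trans (by gcongr; exact hu s hs)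
    _ = α s * ‖V s‖ * (lam * ‖X s‖) := by ring
    _ ≤ α s * ‖V s‖ * (2 * ‖V s‖) := by gcongr
    _ = 2 * α s * ‖V s‖ ^ 2 := by ring

theorem exp_sub_mul_norm_velocity_right_le (h : IsCharacteristicOn lam 0 u X V (Icc a b))
    (hab : a ≤ b) (hαc : ContinuousOn α (Icc a b)) (hα : ∀ s ∈ Icc a b, 0 ≤ α s)
    (hαlam : ∀ s ∈ Icc a b, 4 * α s ≤ lam)
    (hu : ∀ s ∈ Icc a b, ‖u s (X s)‖ ≤ α s * ‖X s‖) (hXb : X b = 0) :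
    exp (lam * (b - a) - 2 * ∫ s in a..b, α s) * ‖V b‖ ≤ ‖V a‖ := by
  have hgrowth : ‖V b‖ ≤ exp (∫ s in a..b, (2 * α s - lam)) * ‖V a‖ := by
    refine norm_le_exp_integral_mul_norm_of_inner_deriv_le hab
      ((hαc.const_mul 2).sub continuousOn_const) h.hasDerivWithinAt_velocity fun s hs ↦ ?_
    rw [zero_add, inner_smul_right, inner_sub_right, real_inner_self_eq_norm_sq, mul_sub, sub_mul]
    gcongr ?_ - _
    exact (abs_le.1 (h.abs_friction_mul_inner_le hα hαlam hu hXb hs)).2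
  have hint : ∫ s in a..b, (2 * α s - lam) = -(lam * (b - a) - 2 * ∫ s in a..b, α s) := by
    rw [integral_const_mul_sub_const (hαc.intervalIntegrable_of_Icc hab)]
    ring
  rwa [hint, exp_neg, le_inv_mul_iff₀ (exp_pos _)] at hgrowth

theorem norm_velocity_left_le_exp_add_mul (h : IsCharacteristicOn lam 0 u X V (Icc a b))
    (hab : a ≤ b) (hαc : ContinuousOn α (Icc a b)) (hα : ∀ s ∈ Icc a b, 0 ≤ α s)
    (hαlam : ∀ s ∈ Icc a b, 4 * α s ≤ lam)
    (hu : ∀ s ∈ Icc a b, ‖u s (X s)‖ ≤ α s * ‖X s‖) (hXb : X b = 0) :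
    ‖V a‖ ≤ exp (lam * (b - a) + 2 * ∫ s in a..b, α s) * ‖V b‖ := by
  have hgrowth : exp (∫ s in a..b, (-2 * α s - lam)) * ‖V a‖ ≤ ‖V b‖ := by
    refine exp_integral_mul_norm_le_norm_of_le_inner_deriv hab
      ((hαc.const_mul (-2)).sub continuousOn_const) h.hasDerivWithinAt_velocity fun s hs ↦ ?_
    rw [zero_add, inner_smul_right, inner_sub_right, real_inner_self_eq_norm_sq, mul_sub, sub_mul]
    linarith [(abs_le.1 (h.abs_friction_mul_inner_le hα hαlam hu hXb hs)).1]
  have hint : ∫ s in a..b, (-2 * α s - lam) = -(lam * (b - a) + 2 * ∫ s in a..b, α s) := by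
    rw [integral_const_mul_sub_const (hαc.intervalIntegrable_of_Icc hab)]
    ring
  rwa [hint, exp_neg, inv_mul_le_iff₀ (exp_pos _)] at hgrowth

end IsCharacteristicOn

theorem characteristics_velocity_biLipschitz_general {a t lam : ℝ} {g : E} {α : ℝ → ℝ}
    {u : ℝ → E → E} {X₁ V₁ X₂ V₂ : ℝ → E} (hat : a ≤ t) (hα : ContinuousOn α (Icc a t))
    (hαpos : ∀ s ∈ Icc a t, 0 ≤ α s)
    (hu : ∀ s ∈ Icc a t, LipschitzWith (Real.toNNReal (α s)) (u s))
    (hlam : ∀ s ∈ Icc a t, 4 * α s ≤ lam)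
    (h₁ : IsCharacteristicOn lam g u X₁ V₁ (Icc a t))
    (h₂ : IsCharacteristicOn lam g u X₂ V₂ (Icc a t)) (hX : X₁ t = X₂ t) :
    (exp (2 * ∫ s in a..t, α s))⁻¹ * exp (lam * (t - a)) * ‖V₁ t - V₂ t‖ ≤ ‖V₁ a - V₂ a‖ ∧
    ‖V₁ a - V₂ a‖ ≤ exp (2 * ∫ s in a..t, α s) * exp (lam * (t - a)) * ‖V₁ t - V₂ t‖ := by
  have hU : ∀ s ∈ Icc a t, ‖u s (X₁ s) - u s (X₂ s)‖ ≤ α s * ‖(X₁ - X₂) s‖ := fun s hs ↦ by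
    simpa [hαpos s hs] using (hu s hs).norm_sub_le (X₁ s) (X₂ s)
  have hXt : (X₁ - X₂) t = 0 := sub_eq_zero.2 hX
  rw [← exp_neg, ← exp_add, ← exp_add, neg_add_eq_sub, add_comm]
  exact ⟨(h₁.sub h₂).exp_sub_mul_norm_velocity_right_le hat hα hαpos hlam hU hXt,
    (h₁.sub h₂).norm_velocity_left_le_exp_add_mul hat hα hαpos hlam hU hXt⟩

end VelocityEstimates

/-- Bi-Lipschitz estimate in the velocity variable for backward characteristics of the
Vlasov-Stokes equation `Ẋ = V`, `V̇ = lam • (g + u(s,X) − V)` with prescribed terminal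
data `(x, vᵢ)` at time `t`. -/
theorem characteristics_velocity_biLipschitz
    (T lam : ℝ) (hT : 0 < T) (g : E3) (α : ℝ → ℝ)
    (hα : ContinuousOn α (Icc 0 T)) (hαpos : ∀ s ∈ Icc (0:ℝ) T, 0 ≤ α s)
    (u : ℝ → E3 → E3)
    (hu : ∀ s ∈ Icc (0:ℝ) T, LipschitzWith (Real.toNNReal (α s)) (u s))
    (hlam : 4 * (1 + sSup (α '' Icc (0:ℝ) T)) ≤ lam)
    (t : ℝ) (ht : t ∈ Icc (0:ℝ) T) (x v₁ v₂ : E3)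
    (X₁ V₁ X₂ V₂ : ℝ → E3)
    (hX₁ : ∀ s ∈ Icc (0:ℝ) t, HasDerivAt X₁ (V₁ s) s)
    (hV₁ : ∀ s ∈ Icc (0:ℝ) t, HasDerivAt V₁ (lam • (g + u s (X₁ s) - V₁ s)) s)
    (hX₂ : ∀ s ∈ Icc (0:ℝ) t, HasDerivAt X₂ (V₂ s) s)
    (hV₂ : ∀ s ∈ Icc (0:ℝ) t, HasDerivAt V₂ (lam • (g + u s (X₂ s) - V₂ s)) s)
    (hXt₁ : X₁ t = x) (hVt₁ : V₁ t = v₁) (hXt₂ : X₂ t = x) (hVt₂ : V₂ t = v₂) :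
    (exp (2 * ∫ s in (0:ℝ)..t, α s))⁻¹ * exp (lam * t) * ‖v₁ - v₂‖ ≤ ‖V₁ 0 - V₂ 0‖ ∧
    ‖V₁ 0 - V₂ 0‖ ≤ exp (2 * ∫ s in (0:ℝ)..t, α s) * exp (lam * t) * ‖v₁ - v₂‖ := by
  have hsub : Icc 0 t ⊆ Icc 0 T := Icc_subset_Icc_right ht.2
  have hαlam : ∀ s ∈ Icc 0 t, 4 * α s ≤ lam := fun s hs ↦ by
    have hle_sSup : α s ≤ sSup (α '' Icc 0 T) :=
      le_csSup (isCompact_Icc.bddAbove_image hα) (mem_image_of_mem α (hsub hs))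
    linarith
  have h₁ : IsCharacteristicOn lam g u X₁ V₁ (Icc 0 t) :=
    ⟨fun s hs ↦ (hX₁ s hs).hasDerivWithinAt, fun s hs ↦ (hV₁ s hs).hasDerivWithinAt⟩
  have h₂ : IsCharacteristicOn lam g u X₂ V₂ (Icc 0 t) :=
    ⟨fun s hs ↦ (hX₂ s hs).hasDerivWithinAt, fun s hs ↦ (hV₂ s hs).hasDerivWithinAt⟩
  simpa [hVt₁, hVt₂] using characteristics_velocity_biLipschitz_general ht.1 (hα.mono hsub)
    (fun s hs ↦ hαpos s (hsub hs)) (fun s hs ↦ hu s (hsub hs)) hαlam h₁ h₂ (hXt₁.trans hXt₂.symm)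
end

section
/- Let h : ℝ³ × ℝ³ → [0,∞) be measurable and essentially bounded, and let 0 ≤ l ≤ k be real numbers with M_k[h] < ∞. Then there is a constant C, depending only on k and l, such that ‖m_l[h]‖_{L^{(3+k)/(3+l)}(ℝ³)} ≤ C · ‖h‖_{L^∞(ℝ³×ℝ³)}^{(k−l)/(3+k)} · M_k[h]^{(3+l)/(3+k)}. -/
open Real Set MeasureTheory ENNReal

local notation "E3" => EuclideanSpace ℝ (Fin 3)

/-!
For a profile `g` with `0 ≤ g ≤ A` on a `d`-dimensional space, split the `l`-th moment at radius
`R`. Inside the ball bound `g` by `A`, which gives a multiple of `A * R ^ (d + l)`; outside it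
`‖v‖ ^ l ≤ R ^ (l - k) * ‖v‖ ^ k`, which gives at most `R ^ (l - k)` times the `k`-th moment.
Optimizing in `R` bounds the `l`-th moment by a multiple of
`A ^ ((k - l) / (d + k)) * (k-th moment) ^ ((d + l) / (d + k))`. Applied to almost every slice
`h (x, ·)` and raised to the power `(d + k) / (d + l)`, the right-hand side is linear in the `k`-th
moment, so integrating in `x` produces the `k`-th moment of `h`.
-/

section Optimization

lemma le_mul_rpow_mul_rpow_of_forall_le_add_of_pos {a b s t c m : ℝ} (ha : 0 < a) (hb : 0 < b)
    (hst : s + t ≠ 0) (h : ∀ R, 0 < R → m ≤ c * (a * R ^ s) + R ^ (-t) * b) :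
    m ≤ (c + 1) * (a ^ (t / (s + t)) * b ^ (s / (s + t))) := by
  -- The radius at which `a * R ^ s = R ^ (-t) * b`.
  set R := (b / a) ^ (s + t)⁻¹
  have rpow_R (u : ℝ) : R ^ u = b ^ (u / (s + t)) / a ^ (u / (s + t)) := by
    rw [← rpow_mul (by positivity), inv_mul_eq_div, div_rpow hb.le ha.le]
  have sum_exponents : t / (s + t) + s / (s + t) = 1 := by field_simp; ring
  have inner_eq : a * R ^ s = a ^ (t / (s + t)) * b ^ (s / (s + t)) := by
    rw [rpow_R, eq_sub_of_add_eq sum_exponents, rpow_sub ha, Real.rpow_one]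
    ring
  have outer_eq : R ^ (-t) * b = a ^ (t / (s + t)) * b ^ (s / (s + t)) := by
    rw [rpow_R, neg_div, rpow_neg hb.le, rpow_neg ha.le, eq_sub_of_add_eq' sum_exponents,
      rpow_sub hb, Real.rpow_one]
    field_simp
  calc m ≤ c * (a * R ^ s) + R ^ (-t) * b := h R (by positivity)
    _ = (c + 1) * (a ^ (t / (s + t)) * b ^ (s / (s + t))) := by rw [inner_eq, outer_eq]; ring

lemma le_mul_rpow_mul_rpow_of_forall_le_add {a b s t c m : ℝ} (ha : 0 ≤ a) (hb : 0 ≤ b)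
    (hs : 0 ≤ s) (ht : 0 ≤ t) (hst : s + t ≠ 0) (hc : 0 ≤ c)
    (h : ∀ R, 0 < R → m ≤ c * (a * R ^ s) + R ^ (-t) * b) :
    m ≤ (c + 1) * (a ^ (t / (s + t)) * b ^ (s / (s + t))) := by
  -- If `a` or `b` vanishes there is no optimal radius, so both are perturbed to be positive.
  have perturbed (ε : ℝ) (hε : 0 < ε) :
      m ≤ (c + 1) * ((a + ε) ^ (t / (s + t)) * (b + ε) ^ (s / (s + t))) := by
    refine le_mul_rpow_mul_rpow_of_forall_le_add_of_pos (by positivity) (by positivity) hst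
      fun R hR ↦ (h R hR).trans ?_
    gcongr <;> linarith
  have hcont : Continuous fun ε : ℝ ↦
      (c + 1) * ((a + ε) ^ (t / (s + t)) * (b + ε) ^ (s / (s + t))) := by
    have := Real.continuous_rpow_const (q := t / (s + t)) (by positivity)
    have := Real.continuous_rpow_const (q := s / (s + t)) (by positivity)
    fun_prop
  have hlim := (hcont.tendsto 0).mono_left (nhdsWithin_le_nhds (s := Ioi 0))
  simp only [add_zero] at hlim
  exact ge_of_tendsto hlim (eventually_mem_nhdsWithin.mono perturbed)

end Optimization

section LebesgueNorms

variable {α E : Type*} [MeasurableSpace α] [NormedAddCommGroup E] {μ : Measure α}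

lemma ae_norm_le_toReal_eLpNorm_top {f : α → E} (hf : eLpNorm f ⊤ μ < ⊤) :
    ∀ᵐ x ∂μ, ‖f x‖ ≤ (eLpNorm f ⊤ μ).toReal := by
  rw [eLpNorm_exponent_top] at hf ⊢
  filter_upwards [ae_le_eLpNormEssSup (f := f) (μ := μ)] with x hx
  simpa using ENNReal.toReal_mono hf.ne hx

lemma eLpNorm_inv_le_of_ae_norm_le_mul_rpow {f : α → E} {F : α → ℝ} {c q : ℝ} (hc : 0 ≤ c)
    (hq : 0 < q) (hF : Integrable F μ) (hF_nonneg : 0 ≤ᵐ[μ] F)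
    (h : ∀ᵐ x ∂μ, ‖f x‖ ≤ c * F x ^ q) :
    eLpNorm f (ENNReal.ofReal q⁻¹) μ ≤ ENNReal.ofReal (c * (∫ x, F x ∂μ) ^ q) := by
  have eLpNorm_one : eLpNorm F 1 μ = ENNReal.ofReal (∫ x, F x ∂μ) := by
    rw [eLpNorm_one_eq_lintegral_enorm, ← ofReal_integral_norm_eq_lintegral_enorm hF]
    congr 1
    exact integral_congr_ae (hF_nonneg.mono fun x hx ↦ Real.norm_of_nonneg hx)
  calc eLpNorm f (ENNReal.ofReal q⁻¹) μ
      ≤ ENNReal.ofReal c * eLpNorm (fun x ↦ ‖F x‖ ^ q) (ENNReal.ofReal q⁻¹) μ := by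
        refine eLpNorm_le_mul_eLpNorm_of_ae_le_mul ?_ _
        filter_upwards [h, hF_nonneg] with x hx hFx
        rwa [Real.norm_of_nonneg (by positivity), Real.norm_of_nonneg hFx]
    _ = ENNReal.ofReal c * ENNReal.ofReal (∫ x, F x ∂μ) ^ q := by
        rw [eLpNorm_norm_rpow _ hq, ← ENNReal.ofReal_mul (by positivity),
          inv_mul_cancel₀ hq.ne', ENNReal.ofReal_one, eLpNorm_one]
    _ = ENNReal.ofReal (c * (∫ x, F x ∂μ) ^ q) := by
        rw [ENNReal.ofReal_rpow_of_nonneg (integral_nonneg_of_ae hF_nonneg) hq.le,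
          ENNReal.ofReal_mul hc]

end LebesgueNorms

section BallIntegral

open Module (finrank finrank_pos)
open Metric (ball)

lemma pow_sub_one_mul_rpow {n : ℕ} (hn : 0 < n) {y : ℝ} (hy : 0 < y) (l : ℝ) :
    y ^ (n - 1) * y ^ l = y ^ (n + l - 1) := by
  rw [← Real.rpow_natCast, Nat.cast_pred hn, ← rpow_add hy]
  ring_nf

variable {V : Type*} [NormedAddCommGroup V] [NormedSpace ℝ V] [FiniteDimensional ℝ V]
  [Nontrivial V] [MeasurableSpace V] [BorelSpace V] (μ : Measure V) [μ.IsAddHaarMeasure]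
  {l R : ℝ}

lemma integrableOn_norm_rpow_ball (hl : -(finrank ℝ V : ℝ) < l) (hR : 0 < R) :
    IntegrableOn (fun v : V ↦ ‖v‖ ^ l) (ball 0 R) μ := by
  rw [integrableOn_fun_norm_addHaar μ (f := fun y ↦ y ^ l)]
  have hradial : IntegrableOn (fun y : ℝ ↦ y ^ (finrank ℝ V + l - 1)) (Ioo 0 R) :=
    (intervalIntegral.integrableOn_Ioo_rpow_iff hR).2 (by linarith)
  refine hradial.congr_fun (fun y hy ↦ ?_) measurableSet_Ioo
  exact (pow_sub_one_mul_rpow finrank_pos hy.1 l).symm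

lemma setIntegral_norm_rpow_ball (hl : -(finrank ℝ V : ℝ) < l) (hR : 0 ≤ R) :
    ∫ v in ball 0 R, ‖v‖ ^ l ∂μ =
      finrank ℝ V / (finrank ℝ V + l) * μ.real (ball 0 1) * R ^ (finrank ℝ V + l) := by
  have hradial : ∫ y in Ioi (0 : ℝ), y ^ (finrank ℝ V - 1) • (Iio R).indicator (· ^ l) y =
      R ^ (finrank ℝ V + l) / (finrank ℝ V + l) := by
    calc _ = ∫ y in Ioi (0 : ℝ), (Iio R).indicator (· ^ (finrank ℝ V + l - 1)) y := by
          refine setIntegral_congr_fun measurableSet_Ioi fun y hy ↦ ?_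
          by_cases hyR : y ∈ Iio R
          · simp only [indicator_of_mem hyR, smul_eq_mul, pow_sub_one_mul_rpow finrank_pos hy]
          · simp only [indicator_of_notMem hyR, smul_zero]
      _ = ∫ y in 0..R, y ^ (finrank ℝ V + l - 1) := by
          rw [setIntegral_indicator measurableSet_Iio, Ioi_inter_Iio,
            ← integral_Ioc_eq_integral_Ioo, intervalIntegral.integral_of_le hR]
      _ = _ := by
          rw [integral_rpow (.inl (by linarith)), sub_add_cancel, zero_rpow (by linarith), sub_zero]
  have hball : (ball (0 : V) R).indicator (fun v ↦ ‖v‖ ^ l) =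
      fun v ↦ (Iio R).indicator (· ^ l) ‖v‖ := by
    ext v
    by_cases hv : ‖v‖ < R <;> simp [hv]
  rw [← integral_indicator measurableSet_ball, hball, integral_fun_norm_addHaar μ, hradial,
    nsmul_eq_mul, smul_eq_mul]
  ring

end BallIntegral

section Moments

open Metric (ball)

lemma norm_rpow_mul_le_indicator_add {V : Type*} [SeminormedAddCommGroup V] {k l R A y : ℝ} {v : V}
    (hlk : l ≤ k) (hR : 0 < R) (hy : 0 ≤ y) (hyA : y ≤ A) :
    ‖v‖ ^ l * y ≤
      (ball (0 : V) R).indicator (fun v ↦ A * ‖v‖ ^ l) v + R ^ (l - k) * (‖v‖ ^ k * y) := by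
  by_cases hv : v ∈ ball (0 : V) R
  · rw [indicator_of_mem hv, mul_comm A]
    exact le_add_of_le_of_nonneg (by gcongr) (by positivity)
  · have hRv : R ≤ ‖v‖ := by simpa using hv
    rw [indicator_of_notMem hv, zero_add, ← mul_assoc]
    gcongr
    calc ‖v‖ ^ l = ‖v‖ ^ (l - k) * ‖v‖ ^ k := by
          rw [← rpow_add (hR.trans_le hRv), sub_add_cancel]
      _ ≤ R ^ (l - k) * ‖v‖ ^ k := by
          gcongr ?_ * _
          exact rpow_le_rpow_of_nonpos hR hRv (by linarith)

variable {V : Type*} [NormedAddCommGroup V] [MeasurableSpace V]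

/-- The absolute moment `∫ ‖v‖ ^ k * g v ∂μ` of order `k` of a density `g` with respect to `μ`;
the velocity moment `m_k[h](x)` is `absMoment volume k fun v ↦ h (x, v)`. -/
noncomputable def absMoment (μ : Measure V) (k : ℝ) (g : V → ℝ) : ℝ :=
  ∫ v, ‖v‖ ^ k * g v ∂μ

lemma absMoment_nonneg {μ : Measure V} {k : ℝ} {g : V → ℝ} (hg : 0 ≤ᵐ[μ] g) :
    0 ≤ absMoment μ k g :=
  integral_nonneg_of_ae (hg.mono fun _ hv ↦ mul_nonneg (by positivity) hv)

lemma absMoment_le_mul_setIntegral_ball_add [OpensMeasurableSpace V] {μ : Measure V}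
    {k l R A : ℝ} {g : V → ℝ} (hlk : l ≤ k) (hR : 0 < R)
    (hball : IntegrableOn (fun v ↦ ‖v‖ ^ l) (ball (0 : V) R) μ)
    (hg : 0 ≤ᵐ[μ] g) (hgA : ∀ᵐ v ∂μ, g v ≤ A) (h_int : Integrable (fun v ↦ ‖v‖ ^ k * g v) μ) :
    absMoment μ l g ≤ A * ∫ v in ball 0 R, ‖v‖ ^ l ∂μ + R ^ (l - k) * absMoment μ k g := by
  have hinner := (integrable_indicator_iff measurableSet_ball).2 (hball.const_mul A)
  have houter := h_int.const_mul (R ^ (l - k))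
  calc absMoment μ l g
      ≤ ∫ v, ((ball (0 : V) R).indicator (fun v ↦ A * ‖v‖ ^ l) v +
          R ^ (l - k) * (‖v‖ ^ k * g v)) ∂μ := by
        refine integral_mono_of_nonneg ?_ (hinner.add houter) ?_
        · filter_upwards [hg] with v hv using mul_nonneg (by positivity) hv
        · filter_upwards [hg, hgA] with v hv hvA
          exact norm_rpow_mul_le_indicator_add hlk hR hv hvA
    _ = A * ∫ v in ball 0 R, ‖v‖ ^ l ∂μ + R ^ (l - k) * absMoment μ k g := by
        rw [integral_add hinner houter, integral_indicator measurableSet_ball, integral_const_mul,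
          integral_const_mul, absMoment]

end Moments

section Interpolation

open Module (finrank)
open Metric (ball)

variable {V : Type*} [NormedAddCommGroup V] [NormedSpace ℝ V] [MeasurableSpace V]

/-- The constant of the moment interpolation inequalities below: the integral of `‖v‖ ^ l` over the
unit ball, from the inner part of the splitting, plus `1`, from the outer part. -/
noncomputable def momentInterpolationConst (μ : Measure V) (l : ℝ) : ℝ :=
  finrank ℝ V / (finrank ℝ V + l) * μ.real (ball 0 1) + 1

lemma momentInterpolationConst_pos (μ : Measure V) {l : ℝ} (hl : -(finrank ℝ V : ℝ) < l) :
    0 < momentInterpolationConst μ l := by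
  have : 0 < finrank ℝ V + l := by linarith
  unfold momentInterpolationConst
  positivity

variable [FiniteDimensional ℝ V] [Nontrivial V] [BorelSpace V] {μ : Measure V}
  [μ.IsAddHaarMeasure] {k l : ℝ}

theorem absMoment_le_interpolation (hl : -(finrank ℝ V : ℝ) < l) (hlk : l ≤ k) {A : ℝ}
    {g : V → ℝ} (hg : 0 ≤ᵐ[μ] g) (hgA : ∀ᵐ v ∂μ, g v ≤ A)
    (h_int : Integrable (fun v ↦ ‖v‖ ^ k * g v) μ) :
    absMoment μ l g ≤
      momentInterpolationConst μ l * A ^ ((k - l) / (finrank ℝ V + k)) *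
        absMoment μ k g ^ ((finrank ℝ V + l) / (finrank ℝ V + k)) := by
  have hA : 0 ≤ A := (hg.and hgA).exists.elim fun _ hv ↦ hv.1.trans hv.2
  have hdl : 0 < finrank ℝ V + l := by linarith
  have hsum : finrank ℝ V + l + (k - l) = finrank ℝ V + k := by ring
  rw [mul_assoc, ← hsum]
  refine le_mul_rpow_mul_rpow_of_forall_le_add hA (absMoment_nonneg hg) hdl.le (by linarith)
    (by linarith) (by positivity) fun R hR ↦ ?_
  calc absMoment μ l g
      ≤ A * ∫ v in ball 0 R, ‖v‖ ^ l ∂μ + R ^ (l - k) * absMoment μ k g :=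
        absMoment_le_mul_setIntegral_ball_add hlk hR (integrableOn_norm_rpow_ball μ hl hR) hg hgA
          h_int
    _ = _ := by rw [setIntegral_norm_rpow_ball μ hl hR.le, neg_sub]; ring

theorem moment_interpolation_Lp_general {X : Type*} [MeasurableSpace X] {ν : Measure X} [SFinite ν]
    (hl : -(finrank ℝ V : ℝ) < l) (hlk : l ≤ k) {h : X × V → ℝ}
    (h_nonneg : 0 ≤ᵐ[ν.prod μ] h) (h_bdd : eLpNorm h ⊤ (ν.prod μ) < ⊤)
    (h_int : Integrable (fun p ↦ ‖p.2‖ ^ k * h p) (ν.prod μ)) :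
    eLpNorm (fun x ↦ absMoment μ l fun v ↦ h (x, v))
        (ENNReal.ofReal ((finrank ℝ V + k) / (finrank ℝ V + l))) ν ≤
      ENNReal.ofReal (momentInterpolationConst μ l *
        (eLpNorm h ⊤ (ν.prod μ)).toReal ^ ((k - l) / (finrank ℝ V + k)) *
        (∫ p, ‖p.2‖ ^ k * h p ∂ν.prod μ) ^
          ((finrank ℝ V + l) / (finrank ℝ V + k))) := by
  have slices_nonneg := Measure.ae_ae_of_ae_prod h_nonneg
  have slices_le := Measure.ae_ae_of_ae_prod (ae_norm_le_toReal_eLpNorm_top h_bdd)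
  have hC := momentInterpolationConst_pos μ hl
  rw [integral_prod _ h_int, ← inv_div]
  refine eLpNorm_inv_le_of_ae_norm_le_mul_rpow (by positivity)
    (div_pos (by linarith) (by linarith)) h_int.integral_prod_left
    (slices_nonneg.mono fun x hx ↦ absMoment_nonneg hx) ?_
  filter_upwards [slices_nonneg, slices_le, h_int.prod_right_ae] with x hx_nonneg hx_le hx_int
  rw [Real.norm_of_nonneg (absMoment_nonneg hx_nonneg)]
  exact absMoment_le_interpolation hl hlk hx_nonneg
    (hx_le.mono fun v hv ↦ (le_abs_self _).trans hv) hx_int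

end Interpolation

/-- Interpolation estimate for velocity moments: for `0 ≤ l ≤ k`, the `L^{(3+k)/(3+l)}`-norm
of the `l`-th velocity moment `m_l[h](x) = ∫ |v|^l h(x,v) dv` is controlled by
`‖h‖_∞^{(k−l)/(3+k)} · M_k[h]^{(3+l)/(3+k)}`, where `M_k[h] = ∬ |v|^k h dv dx`. -/
theorem moment_interpolation_Lp
    (k l : ℝ) (hl : 0 ≤ l) (hlk : l ≤ k) :
    ∃ C : ℝ, 0 < C ∧
      ∀ h : E3 × E3 → ℝ, Measurable h → (∀ p, 0 ≤ h p) →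
        eLpNorm h ⊤ volume < ⊤ →
        Integrable (fun p : E3 × E3 => ‖p.2‖ ^ k * h p) volume →
        eLpNorm (fun x : E3 => ∫ v : E3, ‖v‖ ^ l * h (x, v))
            (ENNReal.ofReal ((3 + k) / (3 + l))) volume
          ≤ ENNReal.ofReal
              (C * (eLpNorm h ⊤ volume).toReal ^ ((k - l) / (3 + k)) *
                (∫ p : E3 × E3, ‖p.2‖ ^ k * h p) ^ ((3 + l) / (3 + k))) := by
  have hl' : -(Module.finrank ℝ E3 : ℝ) < l := by
    rw [finrank_euclideanSpace_fin]; push_cast; linarith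
  refine ⟨momentInterpolationConst (volume : Measure E3) l, momentInterpolationConst_pos _ hl', ?_⟩
  intro h _ h_nonneg h_bdd h_int
  simpa [absMoment, finrank_euclideanSpace_fin, ← Measure.volume_eq_prod] using
    moment_interpolation_Lp_general hl' hlk (.of_forall h_nonneg) h_bdd h_int
end

section
/- Let d > 0, X ∈ ℝ³ and F ∈ ℝ³, and define w : ℝ³ → ℝ³ by w(x) := (1/|B_d(X)|) · ∫_{B_d(X)} Φ(x − y)·F dy, where Φ is the Oseen tensor and B_d(X) is the closed ball of radius d centered at X. Then there is a universal constant C such that: (i) |w(x)| ≤ C·|F| / (|x − X| + d) for all x ∈ ℝ³; (ii) w is differentiable on ℝ³ and ‖Dw(x)‖ ≤ C·|F| / (|x − X|² + d²) for all x ∈ ℝ³. -/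
open Real Set MeasureTheory

local notation "E3" => EuclideanSpace ℝ (Fin 3)

/-- The Oseen tensor `Φ(x) = (1/(8π)) (|x|⁻¹ Id + |x|⁻³ x ⊗ x)`, viewed as a continuous
linear map `ℝ³ → ℝ³` for each `x ≠ 0`. -/
noncomputable def oseen (x : EuclideanSpace ℝ (Fin 3)) :
    EuclideanSpace ℝ (Fin 3) →L[ℝ] EuclideanSpace ℝ (Fin 3) :=
  (8 * Real.pi)⁻¹ • (‖x‖⁻¹ • ContinuousLinearMap.id ℝ (EuclideanSpace ℝ (Fin 3)) +
    (‖x‖ ^ 3)⁻¹ • ((innerSL ℝ x).smulRight x))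

/-- The smeared Stokeslet: the decaying Stokes solution with right-hand side
`F·δ_{B_d(X)}`, i.e. the average of `Φ(x−y)·F` over the closed ball `B_d(X)`. -/
noncomputable def smearedStokeslet (d : ℝ) (X F x : EuclideanSpace ℝ (Fin 3)) :
    EuclideanSpace ℝ (Fin 3) :=
  (volume (Metric.closedBall X d)).toReal⁻¹ •
    ∫ y in Metric.closedBall X d, oseen (x - y) F

/-! The estimates rest on three observations.

* Under the inversion `z* = z / |z|²` the Stokeslet `z ↦ Φ(z) F` becomes the 1-homogeneous Lipschitz
  map `w ↦ (8π)⁻¹ (|w| F + (w · F) w / |w|)`. Since `|a* - b*| = |a - b| / (|a| |b|)`, this gives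
  both `|Φ(z) F| ≤ |F| / |z|` and `|Φ(a) F - Φ(b) F| ≤ |F| (|a|⁻² + |b|⁻²) |a - b|`.
* By the second bound, the difference quotients of `Φ F` with increment `h` are dominated by
  `k(z + h) + k(z)` with `k(z) = |F| |z|⁻²` locally integrable. As `k(· + h) → k` in `L¹` on compact
  sets, one may differentiate under the integral sign in spite of the singularity.
* On a ball of radius `d` centred at `c` one has `|c| + d ≤ 3 max(|z|, d)`, so that the average of
  `|z|⁻ᵖ` over it is at most a multiple of `(|c| + d)⁻ᵖ`; the cases `p = 1` and `p = 2` are the two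
  decay estimates. -/

open Filter Metric Module Topology
open scoped Pointwise

section Dominated

variable {α ι : Type*} [MeasurableSpace α] {μ : Measure α} {l : Filter ι}

theorem tendsto_integral_zero_of_dominated_of_tendsto_L1 [l.IsCountablyGenerated]
    {f g : ι → α → ℝ} {G : α → ℝ}
    (hf_meas : ∀ᶠ i in l, AEStronglyMeasurable (f i) μ) (hf_nonneg : ∀ i a, 0 ≤ f i a)
    (hfg : ∀ᶠ i in l, ∀ᵐ a ∂μ, f i a ≤ g i a) (hg : ∀ᶠ i in l, Integrable (g i) μ)
    (hG : Integrable G μ) (hgG : Tendsto (fun i ↦ ∫ a, |g i a - G a| ∂μ) l (𝓝 0))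
    (hf : ∀ᵐ a ∂μ, Tendsto (f · a) l (𝓝 0)) :
    Tendsto (fun i ↦ ∫ a, f i a ∂μ) l (𝓝 0) := by
  -- The nonnegative `f i` satisfies `f i ≤ min (f i) |G| + |g i - G|`, and the first summand is
  -- dominated by the fixed integrable function `|G|`.
  have h_le (i : ι) (a : α) : ‖min (f i a) |G a|‖ ≤ |G a| := by
    rw [norm_of_nonneg (le_min (hf_nonneg i a) (abs_nonneg _))]
    exact min_le_right _ _
  have h_trunc : Tendsto (fun i ↦ ∫ a, min (f i a) |G a| ∂μ) l (𝓝 0) := by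
    simpa using tendsto_integral_filter_of_dominated_convergence (f := fun _ ↦ (0 : ℝ))
      (fun a ↦ |G a|)
      (hf_meas.mono fun i hi ↦ hi.inf hG.abs.aestronglyMeasurable)
      (.of_forall fun i ↦ .of_forall (h_le i)) hG.abs
      (hf.mono fun a ha ↦ by simpa using ha.min (tendsto_const_nhds (x := |G a|)))
  refine tendsto_of_tendsto_of_tendsto_of_le_of_le' tendsto_const_nhds
    (by simpa using h_trunc.add hgG)
    (.of_forall fun i ↦ integral_nonneg (hf_nonneg i)) ?_
  filter_upwards [hf_meas, hfg, hg] with i hfi hfgi hgi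
  have h_trunc_int : Integrable (fun a ↦ min (f i a) |G a|) μ :=
    hG.abs.mono' (hfi.inf hG.abs.aestronglyMeasurable) (.of_forall (h_le i))
  have h_diff_int : Integrable (fun a ↦ |g i a - G a|) μ := (hgi.sub hG).abs
  rw [← integral_add h_trunc_int h_diff_int]
  refine integral_mono_of_nonneg (.of_forall (hf_nonneg i)) (h_trunc_int.add h_diff_int) ?_
  filter_upwards [hfgi] with a ha
  rcases le_total (f i a) |G a| with h | h
  · rw [min_eq_left h]; linarith [abs_nonneg (g i a - G a)]
  · rw [min_eq_right h]; linarith [le_abs_self (g i a - G a), le_abs_self (G a)]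

end Dominated

section Translation

variable {A F : Type*} [AddCommGroup A] [TopologicalSpace A] [IsTopologicalAddGroup A]
  [MeasurableSpace A] [BorelSpace A] [NormedAddCommGroup F]
  {μ : Measure A} [μ.IsAddLeftInvariant] {f : A → F} {s : Set A}

theorem locallyIntegrable_comp_add_right (hf : LocallyIntegrable f μ) (a : A) :
    LocallyIntegrable (fun x ↦ f (x + a)) μ := by
  rw [← map_add_right_eq_self μ a] at hf
  exact (locallyIntegrable_map_homeomorph (Homeomorph.addRight a)).1 hf

theorem tendsto_integral_norm_comp_add_right_sub [T2Space A] [IsLocallyFiniteMeasure μ]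
    [μ.InnerRegularCompactLTTop] (hf : Integrable f μ) :
    Tendsto (fun a ↦ ∫ x, ‖f (x + a) - f x‖ ∂μ) (𝓝 0) (𝓝 0) := by
  have hfL : MemLp f 1 μ := memLp_one_iff_integrable.2 hf
  have : Fact ((1 : ENNReal) ≠ ⊤) := ⟨ENNReal.one_ne_top⟩
  have h_cont : Continuous fun a : A ↦ DomAddAct.mk a +ᵥ hfL.toLp f :=
    (DomAddAct.continuous_mk).vadd continuous_const
  have h_norm (a : A) : ‖(DomAddAct.mk a +ᵥ hfL.toLp f) - hfL.toLp f‖ =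
      ∫ x, ‖f (x + a) - f x‖ ∂μ := by
    rw [DomAddAct.mk_vadd_toLp, ← MemLp.toLp_sub, Lp.norm_toLp, eLpNorm_one_eq_lintegral_enorm,
      ← integral_norm_eq_lintegral_enorm]
    · simp [add_comm]
    · exact ((hf.comp_add_left a).sub hf).aestronglyMeasurable
  simp only [← h_norm]
  refine (h_cont.sub continuous_const).norm.tendsto' 0 0 ?_
  simp

theorem tendsto_setIntegral_norm_comp_add_right_sub [T2Space A] [LocallyCompactSpace A]
    [IsLocallyFiniteMeasure μ] [μ.InnerRegularCompactLTTop]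
    (hf : LocallyIntegrable f μ) (hs : IsCompact s) :
    Tendsto (fun a ↦ ∫ x in s, ‖f (x + a) - f x‖ ∂μ) (𝓝 0) (𝓝 0) := by
  obtain ⟨V, hV, hV0⟩ := exists_compact_mem_nhds (0 : A)
  have h_int : Integrable ((s + V).indicator f) μ :=
    (hf.integrableOn_isCompact (hs.add hV)).integrable_indicator (hs.add hV).measurableSet
  refine squeeze_zero' (.of_forall fun a ↦ integral_nonneg fun x ↦ norm_nonneg _) ?_
    (tendsto_integral_norm_comp_add_right_sub h_int)
  filter_upwards [hV0] with a ha
  have h_eq : ∀ x ∈ s, ‖f (x + a) - f x‖ =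
      ‖(s + V).indicator f (x + a) - (s + V).indicator f x‖ := fun x hx ↦ by
    rw [indicator_of_mem (add_mem_add hx ha), indicator_of_mem]
    simpa using add_mem_add hx (mem_of_mem_nhds hV0)
  rw [setIntegral_congr_fun hs.measurableSet h_eq]
  exact setIntegral_le_integral ((h_int.comp_add_right a).sub h_int).norm
    (.of_forall fun x ↦ norm_nonneg _)

theorem setIntegral_comp_sub_left [NormedSpace ℝ F] [μ.IsNegInvariant] (f : A → F) (x : A)
    (s : Set A) : ∫ y in s, f (x - y) ∂μ = ∫ z in (x - ·) ⁻¹' s, f z ∂μ := by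
  simpa using ((μ.measurePreserving_sub_left x).setIntegral_preimage_emb
    (measurableEmbedding_subLeft x) (fun y ↦ f (x - y)) s).symm

end Translation

section Derivative

variable {E G : Type*} [NormedAddCommGroup E] [NormedSpace ℝ E] [FiniteDimensional ℝ E]
  [MeasurableSpace E] [BorelSpace E] [NormedAddCommGroup G] [NormedSpace ℝ G]
  {μ : Measure E} [μ.IsAddHaarMeasure] {s : Set E}
  {u : E → G} {u' : E → E →L[ℝ] G} {k : E → ℝ}

theorem tendsto_setIntegral_norm_fderiv_remainder (hs : IsCompact s)
    (hu : LocallyIntegrable u μ) (hu' : LocallyIntegrable u' μ) (hk : LocallyIntegrable k μ)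
    (hk_nonneg : ∀ z, 0 ≤ k z) (h_deriv : ∀ᵐ z ∂μ, HasFDerivAt u (u' z) z)
    (h_lip : ∀ h, ∀ᵐ z ∂μ, ‖u (z + h) - u z‖ ≤ (k (z + h) + k z) * ‖h‖) :
    Tendsto (fun h ↦ ∫ z in s, ‖h‖⁻¹ * ‖u (z + h) - u z - u' z h‖ ∂μ) (𝓝 0) (𝓝 0) := by
  have hu_s (h : E) : IntegrableOn (fun z ↦ u (z + h)) s μ :=
    (locallyIntegrable_comp_add_right hu h).integrableOn_isCompact hs
  have hk_s (h : E) : IntegrableOn (fun z ↦ k (z + h)) s μ :=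
    (locallyIntegrable_comp_add_right hk h).integrableOn_isCompact hs
  have hu'_s : IntegrableOn u' s μ := hu'.integrableOn_isCompact hs
  have hu0_s : IntegrableOn u s μ := hu.integrableOn_isCompact hs
  have hk0_s : IntegrableOn k s μ := hk.integrableOn_isCompact hs
  refine tendsto_integral_zero_of_dominated_of_tendsto_L1
    (g := fun h z ↦ k (z + h) + k z + ‖u' z‖) (G := fun z ↦ k z + k z + ‖u' z‖)
    (.of_forall fun h ↦ ?_) (fun h z ↦ by positivity) (.of_forall fun h ↦ ?_)
    (.of_forall fun h ↦ ((hk_s h).add hk0_s).add hu'_s.norm) ((hk0_s.add hk0_s).add hu'_s.norm)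
    ?_ ?_
  · exact (((hu_s h).sub hu0_s).sub
      (hu'_s.apply_continuousLinearMap h)).aestronglyMeasurable.norm.const_mul _
  · filter_upwards [ae_restrict_of_ae (h_lip h)] with z hz
    rcases eq_or_ne h 0 with rfl | hh
    · simpa using add_nonneg (add_nonneg (hk_nonneg z) (hk_nonneg z)) (norm_nonneg (u' z))
    rw [inv_mul_le_iff₀ (norm_pos_iff.2 hh)]
    calc ‖u (z + h) - u z - u' z h‖ ≤ ‖u (z + h) - u z‖ + ‖u' z h‖ := norm_sub_le _ _
      _ ≤ (k (z + h) + k z) * ‖h‖ + ‖u' z‖ * ‖h‖ := add_le_add hz ((u' z).le_opNorm h)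
      _ = ‖h‖ * (k (z + h) + k z + ‖u' z‖) := by ring
  · have h_eq (h z : E) : |k (z + h) + k z + ‖u' z‖ - (k z + k z + ‖u' z‖)| =
        ‖k (z + h) - k z‖ := by
      rw [Real.norm_eq_abs]; congr 1; ring
    simpa only [h_eq] using tendsto_setIntegral_norm_comp_add_right_sub hk hs
  · filter_upwards [ae_restrict_of_ae h_deriv] with z hz
    have h_add : Tendsto (fun h ↦ z + h) (𝓝 0) (𝓝 z) := by
      simpa using (continuous_const_add z).tendsto 0
    simpa [Function.comp_def] using (hasFDerivAt_iff_tendsto.1 hz).comp h_add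

theorem hasFDerivAt_setIntegral_comp_add_right_zero (hs : IsCompact s)
    (hu : LocallyIntegrable u μ) (hu' : LocallyIntegrable u' μ) (hk : LocallyIntegrable k μ)
    (hk_nonneg : ∀ z, 0 ≤ k z) (h_deriv : ∀ᵐ z ∂μ, HasFDerivAt u (u' z) z)
    (h_lip : ∀ h, ∀ᵐ z ∂μ, ‖u (z + h) - u z‖ ≤ (k (z + h) + k z) * ‖h‖) :
    HasFDerivAt (fun h ↦ ∫ z in s, u (z + h) ∂μ) (∫ z in s, u' z ∂μ) 0 := by
  rw [hasFDerivAt_iff_tendsto]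
  refine squeeze_zero (fun h ↦ by positivity) (fun h ↦ ?_)
    (tendsto_setIntegral_norm_fderiv_remainder hs hu hu' hk hk_nonneg h_deriv h_lip)
  have hu_s : IntegrableOn (fun z ↦ u (z + h)) s μ :=
    (locallyIntegrable_comp_add_right hu h).integrableOn_isCompact hs
  have hu0_s : IntegrableOn u s μ := hu.integrableOn_isCompact hs
  have hu'_s : IntegrableOn u' s μ := hu'.integrableOn_isCompact hs
  simp only [sub_zero, add_zero]
  have h_diff : IntegrableOn (fun z ↦ u (z + h) - u z) s μ := hu_s.sub hu0_s
  rw [ContinuousLinearMap.integral_apply hu'_s, ← integral_sub hu_s hu0_s,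
    ← integral_sub h_diff (hu'_s.apply_continuousLinearMap h), integral_const_mul]
  gcongr
  exact norm_integral_le_integral_norm _

theorem hasFDerivAt_setIntegral_comp_sub_left (hs : IsCompact s)
    (hu : LocallyIntegrable u μ) (hu' : LocallyIntegrable u' μ) (hk : LocallyIntegrable k μ)
    (hk_nonneg : ∀ z, 0 ≤ k z) (h_deriv : ∀ᵐ z ∂μ, HasFDerivAt u (u' z) z)
    (h_lip : ∀ h, ∀ᵐ z ∂μ, ‖u (z + h) - u z‖ ≤ (k (z + h) + k z) * ‖h‖) (x : E) :
    HasFDerivAt (fun x ↦ ∫ y in s, u (x - y) ∂μ) (∫ y in s, u' (x - y) ∂μ) x := by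
  have h_compact : IsCompact ((x - ·) ⁻¹' s) :=
    (Homeomorph.subLeft x).isClosedEmbedding.isCompact_preimage hs
  have h_zero :=
    hasFDerivAt_setIntegral_comp_add_right_zero h_compact hu hu' hk hk_nonneg h_deriv h_lip
  rw [← sub_self x, ← setIntegral_comp_sub_left u' x s] at h_zero
  have h_comp := h_zero.comp (f := fun x' ↦ x' - x) x ((hasFDerivAt_id x).sub_const x)
  rw [ContinuousLinearMap.comp_id] at h_comp
  refine h_comp.congr_of_eventuallyEq (.of_forall fun x' ↦ ?_)
  simp only [Function.comp_apply, ← setIntegral_comp_sub_left (fun z ↦ u (z + (x' - x))) x s]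
  congr! 3
  simp

end Derivative

section BallAverage

theorem rpow_mul_norm_rpow_neg_le {E : Type*} [NormedAddCommGroup E] {p d : ℝ} {c z : E}
    (hp : 0 ≤ p) (hd : 0 < d) (hz : z ∈ closedBall c d) :
    (‖c‖ + d) ^ p * ‖z‖ ^ (-p) ≤
      3 ^ p * (1 + d ^ p * (closedBall (0 : E) d).indicator (fun z ↦ ‖z‖ ^ (-p)) z) := by
  have h_center : ‖c‖ ≤ ‖z‖ + d := by
    have := norm_sub_norm_le c z
    rw [← dist_eq_norm, dist_comm] at this
    linarith [mem_closedBall.1 hz]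
  by_cases hzd : ‖z‖ ≤ d
  · rw [indicator_of_mem (mem_closedBall_zero_iff.2 hzd)]
    calc (‖c‖ + d) ^ p * ‖z‖ ^ (-p) ≤ (3 * d) ^ p * ‖z‖ ^ (-p) := by gcongr; linarith
      _ = 3 ^ p * (d ^ p * ‖z‖ ^ (-p)) := by rw [mul_rpow zero_le_three hd.le, mul_assoc]
      _ ≤ 3 ^ p * (1 + d ^ p * ‖z‖ ^ (-p)) := by gcongr; linarith
  · have hz_pos : 0 < ‖z‖ := hd.trans (not_le.1 hzd)
    rw [indicator_of_notMem (by simpa using hzd)]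
    calc (‖c‖ + d) ^ p * ‖z‖ ^ (-p) ≤ (3 * ‖z‖) ^ p * ‖z‖ ^ (-p) := by gcongr; linarith
      _ = 3 ^ p * (1 + d ^ p * 0) := by
        rw [mul_rpow zero_le_three hz_pos.le, mul_assoc, ← rpow_add hz_pos]
        simp

variable {E G : Type*} [NormedAddCommGroup E] [NormedSpace ℝ E] [FiniteDimensional ℝ E]
  [MeasurableSpace E] [BorelSpace E] [NormedAddCommGroup G]
  {μ : Measure E} [μ.IsAddHaarMeasure] {p A d : ℝ} {c : E}

omit [FiniteDimensional ℝ E] [MeasurableSpace E] [BorelSpace E] in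
theorem nontrivial_of_lt_finrank (hp : 0 ≤ p) (hpE : p < finrank ℝ E) : Nontrivial E :=
  nontrivial_of_finrank_pos (R := ℝ) (by exact_mod_cast hp.trans_lt hpE)

theorem locallyIntegrable_of_continuousOn_of_norm_le_rpow {f : E → G} (hp : 0 ≤ p)
    (hpE : p < finrank ℝ E) (hf : ContinuousOn f {0}ᶜ) (hfA : ∀ z ≠ 0, ‖f z‖ ≤ A * ‖z‖ ^ (-p)) :
    LocallyIntegrable f μ := by
  have : Nontrivial E := nontrivial_of_lt_finrank hp hpE
  refine locallyIntegrable_of_norm_le_rpow finrank_pos hpE ((Measure.ae_ne μ 0).mono hfA) ?_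
  rw [← restrict_compl_singleton (μ := μ) 0]
  exact hf.aestronglyMeasurable (measurableSet_singleton 0).compl

theorem locallyIntegrable_norm_rpow_neg (hp : 0 ≤ p) (hpE : p < finrank ℝ E) :
    LocallyIntegrable (fun z : E ↦ ‖z‖ ^ (-p)) μ :=
  locallyIntegrable_of_continuousOn_of_norm_le_rpow (A := 1) hp hpE
    (continuous_norm.continuousOn.rpow_const fun _ hz ↦ .inl (norm_ne_zero_iff.2 hz))
    fun z _ ↦ by rw [one_mul, norm_of_nonneg (by positivity)]

theorem setAverage_closedBall_zero_norm_rpow {r : ℝ} (hr : 0 < r) (q : ℝ) :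
    ⨍ z in closedBall (0 : E) r, ‖z‖ ^ q ∂μ =
      r ^ q * ⨍ z in closedBall (0 : E) 1, ‖z‖ ^ q ∂μ := by
  have h_scale := Measure.setIntegral_comp_smul_of_pos μ (fun z : E ↦ ‖z‖ ^ q)
    (closedBall (0 : E) 1) hr
  simp only [norm_smul, norm_of_nonneg hr.le, mul_rpow hr.le (norm_nonneg _), integral_const_mul,
    smul_unitClosedBall_of_nonneg hr.le, smul_eq_mul] at h_scale
  rw [setAverage_eq, setAverage_eq, μ.addHaar_real_closedBall' 0 hr.le, smul_eq_mul, smul_eq_mul,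
    mul_inv, mul_right_comm, ← h_scale]
  ring

/-- The constant in the bound of the average of `‖z‖ ^ (-p)` over a ball `closedBall c d`
by a multiple of `(‖c‖ + d) ^ (-p)`. -/
noncomputable def ballRieszConstant (μ : Measure E) (p : ℝ) : ℝ :=
  3 ^ p * (1 + ⨍ z in closedBall (0 : E) 1, ‖z‖ ^ (-p) ∂μ)

omit [NormedSpace ℝ E] [FiniteDimensional ℝ E] [BorelSpace E] [μ.IsAddHaarMeasure] in
theorem ballRieszConstant_pos : 0 < ballRieszConstant μ p := by
  have : 0 ≤ ⨍ z in closedBall (0 : E) 1, ‖z‖ ^ (-p) ∂μ :=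
    integral_nonneg fun z ↦ by positivity
  unfold ballRieszConstant
  positivity

theorem setAverage_closedBall_indicator_le {f : E → ℝ} (hf : LocallyIntegrable f μ)
    (hf_nonneg : ∀ z, 0 ≤ f z) (c : E) (d : ℝ) :
    ⨍ z in closedBall c d, (closedBall 0 d).indicator f z ∂μ ≤ ⨍ z in closedBall 0 d, f z ∂μ := by
  simp only [setAverage_eq, μ.addHaar_real_closedBall_center c]
  rw [← integral_indicator (s := closedBall (0 : E) d) measurableSet_closedBall]
  refine smul_le_smul_of_nonneg_left (setIntegral_le_integral ?_ (.of_forall fun z ↦ ?_))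
    (by positivity)
  · exact (hf.integrableOn_isCompact (isCompact_closedBall 0 d)).integrable_indicator
      measurableSet_closedBall
  · exact indicator_nonneg (fun z _ ↦ hf_nonneg z) z

theorem setAverage_closedBall_norm_rpow_neg_le (hp : 0 ≤ p) (hpE : p < finrank ℝ E) (hd : 0 < d) :
    ⨍ z in closedBall c d, ‖z‖ ^ (-p) ∂μ ≤ ballRieszConstant μ p / (‖c‖ + d) ^ p := by
  have h_loc := locallyIntegrable_norm_rpow_neg (μ := μ) hp hpE
  have h_int (x : E) : IntegrableOn (fun z : E ↦ ‖z‖ ^ (-p)) (closedBall x d) μ :=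
    h_loc.integrableOn_isCompact (isCompact_closedBall x d)
  set J : E → ℝ := (closedBall (0 : E) d).indicator (fun z ↦ ‖z‖ ^ (-p))
  have hJ_int : IntegrableOn (fun z ↦ d ^ p * J z) (closedBall c d) μ :=
    ((h_int 0).integrable_indicator measurableSet_closedBall).integrableOn.const_mul _
  have h_one : IntegrableOn (fun _ : E ↦ (1 : ℝ)) (closedBall c d) μ :=
    integrableOn_const measure_closedBall_lt_top.ne
  have h_vol : μ.real (closedBall c d) ≠ 0 :=
    (ENNReal.toReal_pos (measure_closedBall_pos μ c hd).ne' measure_closedBall_lt_top.ne).ne'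
  rw [le_div_iff₀' (by positivity)]
  calc (‖c‖ + d) ^ p * ⨍ z in closedBall c d, ‖z‖ ^ (-p) ∂μ
      = (μ.real (closedBall c d))⁻¹ *
          ∫ z in closedBall c d, (‖c‖ + d) ^ p * ‖z‖ ^ (-p) ∂μ := by
        rw [setAverage_eq, integral_const_mul, smul_eq_mul, mul_left_comm]
    _ ≤ (μ.real (closedBall c d))⁻¹ * ∫ z in closedBall c d, 3 ^ p * (1 + d ^ p * J z) ∂μ := by
        gcongr ?_ * ?_
        exact setIntegral_mono_on ((h_int c).const_mul _) ((h_one.add hJ_int).const_mul _)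
          measurableSet_closedBall fun z hz ↦ rpow_mul_norm_rpow_neg_le hp hd hz
    _ = 3 ^ p * (1 + d ^ p * ⨍ z in closedBall c d, J z ∂μ) := by
        rw [integral_const_mul, integral_add h_one hJ_int, integral_const_mul, setAverage_eq,
          setIntegral_const, smul_eq_mul, smul_eq_mul]
        field_simp
    _ ≤ 3 ^ p * (1 + d ^ p * ⨍ z in closedBall (0 : E) d, ‖z‖ ^ (-p) ∂μ) := by
        gcongr
        exact setAverage_closedBall_indicator_le h_loc (fun z ↦ by positivity) c d
    _ = ballRieszConstant μ p := by
        rw [setAverage_closedBall_zero_norm_rpow hd, ← mul_assoc, ← rpow_add hd, add_neg_cancel,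
          rpow_zero, one_mul, ballRieszConstant]

variable [NormedSpace ℝ G]

theorem norm_setAverage_closedBall_le {f : E → G} (hp : 0 ≤ p) (hpE : p < finrank ℝ E)
    (hd : 0 < d) (hA : 0 ≤ A) (hf : ∀ z ≠ 0, ‖f z‖ ≤ A * ‖z‖ ^ (-p)) :
    ‖⨍ z in closedBall c d, f z ∂μ‖ ≤ A * ballRieszConstant μ p / (‖c‖ + d) ^ p := by
  have : Nontrivial E := nontrivial_of_lt_finrank hp hpE
  have h_int : IntegrableOn (fun z : E ↦ A * ‖z‖ ^ (-p)) (closedBall c d) μ :=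
    ((locallyIntegrable_norm_rpow_neg hp hpE).integrableOn_isCompact
      (isCompact_closedBall c d)).const_mul _
  calc ‖⨍ z in closedBall c d, f z ∂μ‖
      = (μ.real (closedBall c d))⁻¹ * ‖∫ z in closedBall c d, f z ∂μ‖ := by
        rw [setAverage_eq, norm_smul, norm_of_nonneg (by positivity)]
    _ ≤ (μ.real (closedBall c d))⁻¹ * ∫ z in closedBall c d, A * ‖z‖ ^ (-p) ∂μ := by
        gcongr
        exact norm_integral_le_of_norm_le h_int
          (ae_restrict_of_ae ((Measure.ae_ne μ 0).mono hf))
    _ = A * ⨍ z in closedBall c d, ‖z‖ ^ (-p) ∂μ := by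
        rw [setAverage_eq, integral_const_mul, smul_eq_mul, mul_left_comm]
    _ ≤ A * ballRieszConstant μ p / (‖c‖ + d) ^ p := by
        rw [mul_div_assoc]
        gcongr
        exact setAverage_closedBall_norm_rpow_neg_le hp hpE hd

theorem setAverage_closedBall_comp_sub_left (g : E → G) (x c : E) (d : ℝ) :
    ⨍ y in closedBall c d, g (x - y) ∂μ = ⨍ z in closedBall (x - c) d, g z ∂μ := by
  have h_preimage : (x - ·) ⁻¹' closedBall c d = closedBall (x - c) d := by
    rw [sub_eq_neg_add]
    exact (IsometryEquiv.subLeft x).preimage_closedBall c d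
  rw [setAverage_eq, setAverage_eq, setIntegral_comp_sub_left, h_preimage,
    μ.addHaar_real_closedBall_center, μ.addHaar_real_closedBall_center (x - c)]

end BallAverage

section SingularKernel

variable {E G : Type*} [NormedAddCommGroup E] [NormedSpace ℝ E] [NormedAddCommGroup G]
  [NormedSpace ℝ G]

/-- `IsSingularKernel p L u`: the map `u` is `C¹` away from the origin, where its size is at most
`L * ‖z‖ ^ (-p)` and its difference quotients obey the matching bound of order `-(p + 1)`. -/
structure IsSingularKernel (p L : ℝ) (u : E → G) : Prop where
  nonneg : 0 ≤ L
  contDiffOn : ContDiffOn ℝ 1 u {0}ᶜ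
  norm_le : ∀ z ≠ 0, ‖u z‖ ≤ L * ‖z‖ ^ (-p)
  norm_sub_le : ∀ a ≠ 0, ∀ b ≠ 0,
    ‖u a - u b‖ ≤ L * (‖a‖ ^ (-(p + 1)) + ‖b‖ ^ (-(p + 1))) * ‖a - b‖

namespace IsSingularKernel

variable {p L : ℝ} {u : E → G}

theorem hasFDerivAt (hu : IsSingularKernel p L u) {z : E} (hz : z ≠ 0) :
    HasFDerivAt u (fderiv ℝ u z) z :=
  ((hu.contDiffOn.contDiffAt (isOpen_compl_singleton.mem_nhds hz)).differentiableAt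
    one_ne_zero).hasFDerivAt

theorem norm_fderiv_le (hu : IsSingularKernel p L u) {z : E} (hz : z ≠ 0) :
    ‖fderiv ℝ u z‖ ≤ 3 * L * ‖z‖ ^ (-(p + 1)) := by
  have hz_pos : 0 < ‖z‖ ^ (-(p + 1)) := by positivity
  have h_cont : ContinuousAt (fun x : E ↦ ‖x‖ ^ (-(p + 1))) z :=
    continuous_norm.continuousAt.rpow_const (.inl (norm_ne_zero_iff.2 hz))
  have h_near : ∀ᶠ x in 𝓝 z, ‖x‖ ^ (-(p + 1)) ≤ 2 * ‖z‖ ^ (-(p + 1)) :=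
    h_cont.eventually_le_const (by linarith)
  refine norm_fderiv_le_of_lip' ℝ (mul_nonneg (mul_nonneg zero_le_three hu.nonneg) hz_pos.le) ?_
  filter_upwards [h_near, isOpen_compl_singleton.mem_nhds hz] with x hx hx0
  calc ‖u x - u z‖ ≤ L * (‖x‖ ^ (-(p + 1)) + ‖z‖ ^ (-(p + 1))) * ‖x - z‖ :=
        hu.norm_sub_le x hx0 z hz
    _ ≤ L * (2 * ‖z‖ ^ (-(p + 1)) + ‖z‖ ^ (-(p + 1))) * ‖x - z‖ := by
      have := hu.nonneg
      gcongr
    _ = 3 * L * ‖z‖ ^ (-(p + 1)) * ‖x - z‖ := by ring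

variable [FiniteDimensional ℝ E] [MeasurableSpace E] [BorelSpace E]
  {μ : Measure E} [μ.IsAddHaarMeasure]

theorem locallyIntegrable (hu : IsSingularKernel p L u) (hp : 0 ≤ p) (hpE : p < finrank ℝ E) :
    LocallyIntegrable u μ :=
  locallyIntegrable_of_continuousOn_of_norm_le_rpow hp hpE hu.contDiffOn.continuousOn hu.norm_le

theorem locallyIntegrable_fderiv (hu : IsSingularKernel p L u) (hp : 0 ≤ p)
    (hpE : p + 1 < finrank ℝ E) : LocallyIntegrable (fderiv ℝ u) μ :=
  locallyIntegrable_of_continuousOn_of_norm_le_rpow (by linarith) hpE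
    (hu.contDiffOn.continuousOn_fderiv_of_isOpen isOpen_compl_singleton le_rfl)
    fun _ ↦ hu.norm_fderiv_le

theorem ae_norm_comp_add_right_sub_le (hu : IsSingularKernel p L u) [Nontrivial E] (h : E) :
    ∀ᵐ z ∂μ, ‖u (z + h) - u z‖ ≤
      (L * ‖z + h‖ ^ (-(p + 1)) + L * ‖z‖ ^ (-(p + 1))) * ‖h‖ := by
  filter_upwards [Measure.ae_ne μ 0, Measure.ae_ne μ (-h)] with z hz hzh
  have h_sub := hu.norm_sub_le (z + h) (fun h_zero ↦ hzh (eq_neg_of_add_eq_zero_left h_zero)) z hz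
  rwa [add_sub_cancel_left, mul_add] at h_sub

theorem hasFDerivAt_setAverage (hu : IsSingularKernel p L u) (hp : 0 ≤ p)
    (hpE : p + 1 < finrank ℝ E) {s : Set E} (hs : IsCompact s) (x : E) :
    HasFDerivAt (fun x ↦ ⨍ y in s, u (x - y) ∂μ) (⨍ y in s, fderiv ℝ u (x - y) ∂μ) x := by
  have : Nontrivial E := nontrivial_of_lt_finrank (by linarith) hpE
  have hk : LocallyIntegrable (fun z : E ↦ L * ‖z‖ ^ (-(p + 1))) μ :=
    (locallyIntegrable_norm_rpow_neg (by linarith) hpE).smul L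
  have hk_nonneg (z : E) : 0 ≤ L * ‖z‖ ^ (-(p + 1)) := mul_nonneg hu.nonneg (by positivity)
  have h_deriv : ∀ᵐ z ∂μ, HasFDerivAt u (fderiv ℝ u z) z :=
    (Measure.ae_ne μ 0).mono fun z ↦ hu.hasFDerivAt
  have h_integral := hasFDerivAt_setIntegral_comp_sub_left hs
    (hu.locallyIntegrable hp (by linarith)) (hu.locallyIntegrable_fderiv hp hpE) hk hk_nonneg
    h_deriv hu.ae_norm_comp_add_right_sub_le x
  simp only [setAverage_eq]
  exact h_integral.const_smul (μ.real s)⁻¹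

theorem norm_setAverage_le (hu : IsSingularKernel p L u) (hp : 0 ≤ p) (hpE : p < finrank ℝ E)
    {d : ℝ} (hd : 0 < d) (X x : E) :
    ‖⨍ y in closedBall X d, u (x - y) ∂μ‖ ≤ L * ballRieszConstant μ p / (‖x - X‖ + d) ^ p := by
  rw [setAverage_closedBall_comp_sub_left]
  exact norm_setAverage_closedBall_le hp hpE hd hu.nonneg hu.norm_le

theorem norm_fderiv_setAverage_le (hu : IsSingularKernel p L u) (hp : 0 ≤ p)
    (hpE : p + 1 < finrank ℝ E) {d : ℝ} (hd : 0 < d) (X x : E) :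
    ‖fderiv ℝ (fun x ↦ ⨍ y in closedBall X d, u (x - y) ∂μ) x‖ ≤
      3 * L * ballRieszConstant μ (p + 1) / (‖x - X‖ + d) ^ (p + 1) := by
  rw [(hu.hasFDerivAt_setAverage hp hpE (isCompact_closedBall X d) x).fderiv,
    setAverage_closedBall_comp_sub_left]
  exact norm_setAverage_closedBall_le (by linarith) hpE hd
    (mul_nonneg zero_le_three hu.nonneg) fun z ↦ hu.norm_fderiv_le

end IsSingularKernel

end SingularKernel

section Kelvin

variable {V : Type*} [NormedAddCommGroup V] [InnerProductSpace ℝ V]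

/-- The `1`-homogeneous map `w ↦ ‖w‖ F + ‖w‖⁻¹ ⟪w, F⟫ w`. Up to the factor `(8π)⁻¹`, the Stokeslet
`z ↦ oseen z F` is its composition with the inversion `z ↦ ‖z‖⁻² z`. -/
noncomputable def invertedStokeslet (F w : V) : V :=
  ‖w‖ • F + inner ℝ w F • NormedSpace.normalize w

theorem norm_normalize_le_one (w : V) : ‖NormedSpace.normalize w‖ ≤ 1 := by
  rcases eq_or_ne w 0 with rfl | hw
  · simp
  · exact (NormedSpace.norm_normalize hw).le

theorem inner_smul_normalize (F w : V) :
    inner ℝ w F • NormedSpace.normalize w = inner ℝ (NormedSpace.normalize w) F • w := by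
  simp only [NormedSpace.normalize, real_inner_smul_left, smul_smul, mul_comm]

theorem norm_norm_smul_normalize_sub_le (v w : V) :
    ‖‖w‖ • NormedSpace.normalize v - w‖ ≤ 2 * ‖v - w‖ := by
  have h_split : ‖w‖ • NormedSpace.normalize v - w =
      (‖w‖ - ‖v‖) • NormedSpace.normalize v + (v - w) := by
    rw [sub_smul, NormedSpace.norm_smul_normalize]
    abel
  calc ‖‖w‖ • NormedSpace.normalize v - w‖
      ≤ |‖w‖ - ‖v‖| * ‖NormedSpace.normalize v‖ + ‖v - w‖ := by
        rw [h_split, ← Real.norm_eq_abs, ← norm_smul]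
        exact norm_add_le _ _
    _ ≤ ‖v - w‖ * 1 + ‖v - w‖ := by
        gcongr
        · rw [abs_sub_comm]
          exact abs_norm_sub_norm_le v w
        · exact norm_normalize_le_one v
    _ = 2 * ‖v - w‖ := by ring

theorem norm_inner_smul_normalize_sub_le (F v w : V) :
    ‖inner ℝ v F • NormedSpace.normalize v - inner ℝ w F • NormedSpace.normalize w‖ ≤
      3 * ‖F‖ * ‖v - w‖ := by
  have h_split : inner ℝ v F • NormedSpace.normalize v - inner ℝ w F • NormedSpace.normalize w =
      inner ℝ (NormedSpace.normalize v) F • (v - w) +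
        inner ℝ (‖w‖ • NormedSpace.normalize v - w) F • NormedSpace.normalize w := by
    rw [inner_smul_normalize F v, inner_sub_left, real_inner_smul_left, sub_smul, smul_sub,
      mul_comm, mul_smul, NormedSpace.norm_smul_normalize]
    abel
  calc ‖inner ℝ v F • NormedSpace.normalize v - inner ℝ w F • NormedSpace.normalize w‖
      ≤ ‖NormedSpace.normalize v‖ * ‖F‖ * ‖v - w‖ +
          ‖‖w‖ • NormedSpace.normalize v - w‖ * ‖F‖ * ‖NormedSpace.normalize w‖ := by
        rw [h_split]
        refine (norm_add_le _ _).trans ?_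
        rw [norm_smul, norm_smul]
        gcongr <;> exact norm_inner_le_norm _ _
    _ ≤ 1 * ‖F‖ * ‖v - w‖ + 2 * ‖v - w‖ * ‖F‖ * 1 := by
        gcongr
        · exact norm_normalize_le_one v
        · exact norm_norm_smul_normalize_sub_le v w
        · exact norm_normalize_le_one w
    _ = 3 * ‖F‖ * ‖v - w‖ := by ring

theorem norm_invertedStokeslet_sub_le (F v w : V) :
    ‖invertedStokeslet F v - invertedStokeslet F w‖ ≤ 4 * ‖F‖ * ‖v - w‖ := by
  calc ‖invertedStokeslet F v - invertedStokeslet F w‖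
      = ‖(‖v‖ - ‖w‖) • F +
          (inner ℝ v F • NormedSpace.normalize v - inner ℝ w F • NormedSpace.normalize w)‖ := by
        rw [invertedStokeslet, invertedStokeslet, sub_smul, add_sub_add_comm]
    _ ≤ ‖v - w‖ * ‖F‖ + 3 * ‖F‖ * ‖v - w‖ := by
        refine norm_add_le_of_le ?_ (norm_inner_smul_normalize_sub_le F v w)
        rw [norm_smul, Real.norm_eq_abs]
        gcongr
        exact abs_norm_sub_norm_le v w
    _ = 4 * ‖F‖ * ‖v - w‖ := by ring

end Kelvin

section Oseen

theorem oseen_eq_smul_invertedStokeslet (z F : E3) :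
    oseen z F = (8 * π)⁻¹ • invertedStokeslet F ((1 / ‖z‖) ^ 2 • z) := by
  rcases eq_or_ne z 0 with rfl | hz
  · simp [oseen, invertedStokeslet]
  rw [invertedStokeslet, NormedSpace.normalize_smul_of_pos (by positivity), NormedSpace.normalize,
    real_inner_smul_left, norm_smul, norm_of_nonneg (by positivity)]
  simp only [oseen, smul_apply, add_apply, ContinuousLinearMap.id_apply,
    ContinuousLinearMap.smulRight_apply, innerSL_apply_apply, smul_smul]
  congr! 3 <;> field_simp

theorem norm_oseen_sub_le_norm_inversion_sub (F a b : E3) :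
    ‖oseen a F - oseen b F‖ ≤ ‖F‖ * ‖(1 / ‖a‖) ^ 2 • a - (1 / ‖b‖) ^ 2 • b‖ := by
  have h_const : (8 * π)⁻¹ * 4 ≤ 1 := by
    rw [inv_mul_le_one₀ (by positivity)]
    linarith [pi_gt_three]
  calc ‖oseen a F - oseen b F‖
      = (8 * π)⁻¹ * ‖invertedStokeslet F ((1 / ‖a‖) ^ 2 • a) -
          invertedStokeslet F ((1 / ‖b‖) ^ 2 • b)‖ := by
        rw [oseen_eq_smul_invertedStokeslet, oseen_eq_smul_invertedStokeslet, ← smul_sub, norm_smul,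
          norm_of_nonneg (by positivity)]
    _ ≤ (8 * π)⁻¹ * (4 * ‖F‖ * ‖(1 / ‖a‖) ^ 2 • a - (1 / ‖b‖) ^ 2 • b‖) := by
        gcongr
        exact norm_invertedStokeslet_sub_le F _ _
    _ = (8 * π)⁻¹ * 4 * (‖F‖ * ‖(1 / ‖a‖) ^ 2 • a - (1 / ‖b‖) ^ 2 • b‖) := by ring
    _ ≤ ‖F‖ * ‖(1 / ‖a‖) ^ 2 • a - (1 / ‖b‖) ^ 2 • b‖ :=
        mul_le_of_le_one_left (by positivity) h_const

theorem norm_oseen_apply_le {z : E3} (hz : z ≠ 0) (F : E3) : ‖oseen z F‖ ≤ ‖F‖ * ‖z‖⁻¹ := by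
  have h_inversion : ‖(1 / ‖z‖) ^ 2 • z‖ = ‖z‖⁻¹ := by
    rw [norm_smul, norm_of_nonneg (by positivity)]
    field_simp
  have h_zero : oseen 0 F = 0 := by simp [oseen]
  have h_sub := norm_oseen_sub_le_norm_inversion_sub F z 0
  rwa [h_zero, smul_zero, sub_zero, sub_zero, h_inversion] at h_sub

theorem norm_oseen_apply_sub_le {a b : E3} (ha : a ≠ 0) (hb : b ≠ 0) (F : E3) :
    ‖oseen a F - oseen b F‖ ≤ ‖F‖ / (‖a‖ * ‖b‖) * ‖a - b‖ := by
  calc ‖oseen a F - oseen b F‖ ≤ ‖F‖ * ‖(1 / ‖a‖) ^ 2 • a - (1 / ‖b‖) ^ 2 • b‖ :=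
        norm_oseen_sub_le_norm_inversion_sub F a b
    _ = ‖F‖ / (‖a‖ * ‖b‖) * ‖a - b‖ := by
        rw [← dist_eq_norm, dist_div_norm_sq_smul ha hb, dist_eq_norm]
        ring

theorem contDiffOn_oseen_apply (F : E3) : ContDiffOn ℝ 1 (fun z ↦ oseen z F) {0}ᶜ := by
  intro z hz
  have h_norm : ContDiffAt ℝ 1 (fun z : E3 ↦ ‖z‖) z := contDiffAt_norm ℝ hz
  have hz_norm : ‖z‖ ≠ 0 := norm_ne_zero_iff.2 hz
  have h_inner : ContDiffAt ℝ 1 (fun z : E3 ↦ inner ℝ z F • z) z :=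
    (contDiffAt_id.inner ℝ contDiffAt_const).smul contDiffAt_id
  simp only [oseen, smul_apply, add_apply, ContinuousLinearMap.id_apply,
    ContinuousLinearMap.smulRight_apply, innerSL_apply_apply]
  exact ((((h_norm.inv hz_norm).smul contDiffAt_const).add
    (((h_norm.pow 3).inv (pow_ne_zero 3 hz_norm)).smul h_inner)).const_smul _).contDiffWithinAt

theorem isSingularKernel_oseen_apply (F : E3) : IsSingularKernel 1 ‖F‖ (fun z ↦ oseen z F) where
  nonneg := norm_nonneg F
  contDiffOn := contDiffOn_oseen_apply F
  norm_le z hz := by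
    rw [rpow_neg_one]
    exact norm_oseen_apply_le hz F
  norm_sub_le a ha b hb := by
    have h_rpow (z : E3) : ‖z‖ ^ (-(1 + 1) : ℝ) = ‖z‖⁻¹ ^ 2 := by
      rw [one_add_one_eq_two, rpow_neg (norm_nonneg z), rpow_two, inv_pow]
    have h_amgm : ‖a‖⁻¹ * ‖b‖⁻¹ ≤ ‖a‖⁻¹ ^ 2 + ‖b‖⁻¹ ^ 2 := by
      nlinarith [sq_nonneg (‖a‖⁻¹ - ‖b‖⁻¹), sq_nonneg (‖a‖⁻¹ + ‖b‖⁻¹)]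
    refine (norm_oseen_apply_sub_le ha hb F).trans ?_
    rw [div_eq_mul_inv, mul_inv, h_rpow, h_rpow]
    gcongr

theorem smearedStokeslet_eq_setAverage (d : ℝ) (X F x : E3) :
    smearedStokeslet d X F x = ⨍ y in closedBall X d, oseen (x - y) F := by
  rw [setAverage_eq, smearedStokeslet, measureReal_def]

end Oseen

/-- Decay estimates for a smeared Stokeslet of strength `F` on a ball of radius `d`:
`|w(x)| ≤ C|F|/(|x−X|+d)`, `w` is differentiable, and `‖Dw(x)‖ ≤ C|F|/(|x−X|²+d²)`. -/
theorem smearedStokeslet_decay :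
    ∃ C : ℝ, 0 < C ∧
      ∀ (d : ℝ), 0 < d → ∀ X F : E3,
        (∀ x : E3, ‖smearedStokeslet d X F x‖ ≤ C * ‖F‖ / (‖x - X‖ + d)) ∧
        Differentiable ℝ (smearedStokeslet d X F) ∧
        (∀ x : E3, ‖fderiv ℝ (smearedStokeslet d X F) x‖ ≤ C * ‖F‖ / (‖x - X‖ ^ 2 + d ^ 2)) := by
  set C₁ := ballRieszConstant (volume : Measure E3) 1
  set C₂ := ballRieszConstant (volume : Measure E3) 2
  have hC₁ : 0 < C₁ := ballRieszConstant_pos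
  have hC₂ : 0 < C₂ := ballRieszConstant_pos
  have h_dim : (1 + 1 : ℝ) < finrank ℝ E3 := by
    rw [finrank_euclideanSpace_fin]
    norm_num
  refine ⟨C₁ + 3 * C₂, by positivity, fun d hd X F ↦ ?_⟩
  have h_kernel := isSingularKernel_oseen_apply F
  have h_average : smearedStokeslet d X F = fun x ↦ ⨍ y in closedBall X d, oseen (x - y) F :=
    funext (smearedStokeslet_eq_setAverage d X F)
  rw [h_average]
  refine ⟨fun x ↦ ?_, fun x ↦ ?_, fun x ↦ ?_⟩
  · refine (h_kernel.norm_setAverage_le zero_le_one (by linarith) hd X x).trans ?_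
    rw [rpow_one, mul_comm]
    gcongr
    linarith
  · exact (h_kernel.hasFDerivAt_setAverage zero_le_one h_dim
      (isCompact_closedBall X d) x).differentiableAt
  · refine (h_kernel.norm_fderiv_setAverage_le zero_le_one h_dim hd X x).trans ?_
    rw [one_add_one_eq_two, rpow_two, mul_right_comm]
    gcongr
    · linarith
    · nlinarith [norm_nonneg (x - X)]
end
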